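/- Let Δ be the F_4 root system with the partition Δ_long = Δ_sin1 ∪ Δ_sin2 ∪ Δ_sin3 as above, and let (x, y), (x′, y′) be two pairs of orthogonal long roots with R_{x,y} ⊂ Δ_sin_i and R_{x′,y′} ⊂ Δ_sin_j for i ≠ j. Then ξ := ⟨x, x′⟩⟨y, y′⟩⟨x, y′⟩⟨y, x′⟩ ≠ 0, and all roots contained in the set Q = R_{x,y} + R_{x′,y′} belong to Δ_sin_k where {k} = {1,2,3} ∖ {i,j}; moreover, if ξ > 0 then Q contains exactly four roots forming ±{x″, y″} with x″ ⊥ y″, and if ξ < 0 then Q contains all eight roots of Δ_sin_k. -/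

import Mathlib

open scoped RealInnerProductSpace

/-- The standard basis vector `e_i` of `ℝ⁴`. -/
noncomputable def e (i : Fin 4) : EuclideanSpace ℝ (Fin 4) :=
  EuclideanSpace.single i 1

/-- The set `{±e_i ± e_j}` for fixed `i, j`. -/
def pmSet (i j : Fin 4) : Set (EuclideanSpace ℝ (Fin 4)) :=
  {v | ∃ ε δ : ℝ, (ε = 1 ∨ ε = -1) ∧ (δ = 1 ∨ δ = -1) ∧ v = ε • e i + δ • e j}

/-- Long roots of `F₄`: `±e_i ± e_j`, `i < j`. -/
def LongF4 : Set (EuclideanSpace ℝ (Fin 4)) :=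
  {v | ∃ i j : Fin 4, i < j ∧ v ∈ pmSet i j}

/-- Short roots of `F₄`: `±e_i` together with `(1/2)(±e₁ ± e₂ ± e₃ ± e₄)`. -/
def ShF4 : Set (EuclideanSpace ℝ (Fin 4)) :=
  {v | ∃ i : Fin 4, v = e i ∨ v = -e i} ∪
  {v | ∃ ε : Fin 4 → ℝ, (∀ i, ε i = 1 ∨ ε i = -1) ∧ v = (1 / 2 : ℝ) • ∑ i, ε i • e i}

/-- The root system `F₄`. -/
def ΔF4 : Set (EuclideanSpace ℝ (Fin 4)) := LongF4 ∪ ShF4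

/-- The partition of the long roots of `F₄`:
`Δ_sin1 = {±e₁±e₂, ±e₃±e₄}`, `Δ_sin2 = {±e₁±e₄, ±e₂±e₃}`, `Δ_sin3 = {±e₁±e₃, ±e₂±e₄}`. -/
def sinF4 : Fin 3 → Set (EuclideanSpace ℝ (Fin 4)) :=
  ![pmSet 0 1 ∪ pmSet 2 3, pmSet 0 3 ∪ pmSet 1 2, pmSet 0 2 ∪ pmSet 1 3]

/-- `R_{x,y} = {±x, ±y}`. -/
def Rset (x y : EuclideanSpace ℝ (Fin 4)) : Set (EuclideanSpace ℝ (Fin 4)) :=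
  {x, -x, y, -y}

/-- `Q = R_{x,y} + R_{x′,y′}`. -/
def Qset (x y x' y' : EuclideanSpace ℝ (Fin 4)) : Set (EuclideanSpace ℝ (Fin 4)) :=
  {v | ∃ a ∈ Rset x y, ∃ b ∈ Rset x' y', v = a + b}

theorem pmSet_comm (i j : Fin 4) : pmSet i j = pmSet j i := by
  ext v
  constructor <;>
  · rintro ⟨ε, δ, hε, hδ, rfl⟩
    exact ⟨δ, ε, hδ, hε, add_comm _ _⟩

theorem neg_mem_pmSet {i j : Fin 4} {v : EuclideanSpace ℝ (Fin 4)} (hv : v ∈ pmSet i j) :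
    -v ∈ pmSet i j := by
  obtain ⟨ε, δ, hε, hδ, rfl⟩ := hv
  refine ⟨-ε, -δ, ?_, ?_, by module⟩
  · rcases hε with rfl | rfl <;> simp
  · rcases hδ with rfl | rfl <;> simp

theorem inner_e (i j : Fin 4) : ⟪e i, e j⟫ = if i = j then 1 else 0 := by
  simp [e, EuclideanSpace.inner_single_left]

theorem inner_self_of_mem_pmSet {i j : Fin 4} (hij : i ≠ j) {v : EuclideanSpace ℝ (Fin 4)}
    (hv : v ∈ pmSet i j) : ⟪v, v⟫ = 2 := by
  obtain ⟨ε, δ, hε, hδ, rfl⟩ := hv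
  simp only [inner_add_left, inner_add_right, real_inner_smul_left, real_inner_smul_right,
    inner_e, hij, hij.symm, if_true, if_false]
  rcases hε with rfl | rfl <;> rcases hδ with rfl | rfl <;> norm_num

/-- Two roots `±e_p ± e_q` and `±e_p ± e_r` have inner product `±1`, and if it is `-1` then the
`e_p` terms cancel in their sum. -/
theorem inner_of_mem_pmSet {p q r : Fin 4} (hpq : p ≠ q) (hpr : p ≠ r) (hqr : q ≠ r)
    {a b : EuclideanSpace ℝ (Fin 4)} (ha : a ∈ pmSet p q) (hb : b ∈ pmSet p r) :
    ⟪a, b⟫ = 1 ∨ ⟪a, b⟫ = -1 ∧ a + b ∈ pmSet q r := by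
  obtain ⟨ε, δ, hε, hδ, rfl⟩ := ha
  obtain ⟨ε', δ', hε', hδ', rfl⟩ := hb
  have hinner : ⟪ε • e p + δ • e q, ε' • e p + δ' • e r⟫ = ε * ε' := by
    simp only [inner_add_left, inner_add_right, real_inner_smul_left, real_inner_smul_right,
      inner_e, hpq.symm, hpr, hqr, if_true, if_false]
    ring
  rw [hinner]
  rcases hε with rfl | rfl <;> rcases hε' with rfl | rfl
  · left; norm_num
  · exact .inr ⟨by norm_num, δ, δ', hδ, hδ', by module⟩
  · exact .inr ⟨by norm_num, δ, δ', hδ, hδ', by module⟩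
  · left; norm_num

/-- The index paired with a given one in the splitting of the coordinates that defines
`sinF4 k`. -/
def partner : Fin 3 → Fin 4 → Fin 4 :=
  ![![1, 0, 3, 2], ![3, 2, 1, 0], ![2, 3, 0, 1]]

theorem mem_sinF4_iff {k : Fin 3} {v : EuclideanSpace ℝ (Fin 4)} :
    v ∈ sinF4 k ↔ ∃ p, v ∈ pmSet p (partner k p) := by
  have h₁ := pmSet_comm 1 0
  have h₂ := pmSet_comm 2 0
  have h₃ := pmSet_comm 3 0
  have h₄ := pmSet_comm 2 1
  have h₅ := pmSet_comm 3 1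
  have h₆ := pmSet_comm 3 2
  fin_cases k <;> simp [sinF4, partner, Fin.exists_fin_succ, *] <;> tauto

theorem mem_pmSet_partner_partner {k : Fin 3} {p : Fin 4} {v : EuclideanSpace ℝ (Fin 4)}
    (hv : v ∈ pmSet p (partner k p)) : v ∈ pmSet (partner k p) (partner k (partner k p)) := by
  have h : ∀ k p, partner k (partner k p) = p := by decide
  rwa [h, pmSet_comm]

theorem exists_common_index {i j : Fin 3} (hij : i ≠ j) {a b : EuclideanSpace ℝ (Fin 4)}
    (ha : a ∈ sinF4 i) (hb : b ∈ sinF4 j) :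
    ∃ p, a ∈ pmSet p (partner i p) ∧ b ∈ pmSet p (partner j p) := by
  obtain ⟨p, ha⟩ := mem_sinF4_iff.1 ha
  obtain ⟨r, hb⟩ := mem_sinF4_iff.1 hb
  have h : ∀ i j : Fin 3, i ≠ j → ∀ p r, p = r ∨ p = partner j r ∨ partner i p = r ∨
      partner i p = partner j r := by decide
  rcases h i j hij p r with h | h | h | h
  · exact ⟨r, h ▸ ha, hb⟩
  · exact ⟨_, h ▸ ha, mem_pmSet_partner_partner hb⟩
  · exact ⟨_, h ▸ mem_pmSet_partner_partner ha, hb⟩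
  · exact ⟨_, h ▸ mem_pmSet_partner_partner ha, mem_pmSet_partner_partner hb⟩

theorem inner_of_mem_sinF4 {i j k : Fin 3} (hij : i ≠ j) (hki : k ≠ i) (hkj : k ≠ j)
    {a b : EuclideanSpace ℝ (Fin 4)} (ha : a ∈ sinF4 i) (hb : b ∈ sinF4 j) :
    ⟪a, b⟫ = 1 ∨ ⟪a, b⟫ = -1 ∧ a + b ∈ sinF4 k := by
  obtain ⟨p, ha, hb⟩ := exists_common_index hij ha hb
  have hne : ∀ k p, p ≠ partner k p := by decide
  have hne' : ∀ i j : Fin 3, i ≠ j → ∀ p, partner i p ≠ partner j p := by decide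
  have hcomp : ∀ i j k : Fin 3, i ≠ j → k ≠ i → k ≠ j → ∀ p,
      partner j p = partner k (partner i p) := by decide
  refine (inner_of_mem_pmSet (hne i p) (hne j p) (hne' i j hij p) ha hb).imp_right ?_
  exact And.imp_right fun h => mem_sinF4_iff.2 ⟨partner i p, hcomp i j k hij hki hkj p ▸ h⟩

theorem sinF4_subset_LongF4 (i : Fin 3) : sinF4 i ⊆ LongF4 := by
  intro v hv
  fin_cases i <;> rcases hv with hv | hv <;> exact ⟨_, _, by decide, hv⟩

theorem neg_mem_sinF4 {i : Fin 3} {v : EuclideanSpace ℝ (Fin 4)} (hv : v ∈ sinF4 i) :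
    -v ∈ sinF4 i := by
  fin_cases i <;> exact hv.imp neg_mem_pmSet neg_mem_pmSet

theorem inner_self_of_mem_LongF4 {v : EuclideanSpace ℝ (Fin 4)} (hv : v ∈ LongF4) :
    ⟪v, v⟫ = 2 := by
  obtain ⟨i, j, hij, hv⟩ := hv
  exact inner_self_of_mem_pmSet hij.ne hv

theorem inner_self_le_of_mem_ΔF4 {v : EuclideanSpace ℝ (Fin 4)} (hv : v ∈ ΔF4) :
    ⟪v, v⟫ ≤ 2 := by
  rcases hv with hv | ⟨i, rfl | rfl⟩ | ⟨ε, hε, rfl⟩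
  · exact (inner_self_of_mem_LongF4 hv).le
  · simp only [inner_e, if_true]; norm_num
  · simp only [inner_neg_neg, inner_e, if_true]; norm_num
  · have hsq : ∀ i, ε i * ε i = 1 := fun i => by rcases hε i with h | h <;> rw [h] <;> norm_num
    simp only [real_inner_smul_left, real_inner_smul_right, sum_inner, inner_sum, inner_e,
      mul_ite, mul_one, mul_zero, Finset.sum_ite_eq', Finset.mem_univ, if_true]
    simp only [mul_left_comm (ε _), hsq]
    norm_num

theorem mem_Rset_iff {x y z : EuclideanSpace ℝ (Fin 4)} :
    z ∈ Rset x y ↔ ∃ c : ℝ, (c = 1 ∨ c = -1) ∧ (z = c • x ∨ z = c • y) := by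
  simp only [Rset, Set.mem_insert_iff, Set.mem_singleton_iff, or_and_right, exists_or,
    exists_eq_left, one_smul, neg_one_smul, or_assoc]
  tauto

theorem eq_smul_of_inner_eq {a b : EuclideanSpace ℝ (Fin 4)} {c : ℝ} (hc : c = 1 ∨ c = -1)
    (ha : ⟪a, a⟫ = 2) (hb : ⟪b, b⟫ = 2) (hab : ⟪a, b⟫ = 2 * c) : a = c • b := by
  rw [← sub_eq_zero, ← inner_self_eq_zero (𝕜 := ℝ), real_inner_sub_sub_self]
  simp only [real_inner_smul_left, real_inner_smul_right, ha, hb, hab]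
  rcases hc with rfl | rfl <;> norm_num

/-- The reflection of `a` in `b` lies in the third class of long roots. -/
theorem sub_inner_smul_mem_sinF4 {i j k : Fin 3} (hij : i ≠ j) (hki : k ≠ i) (hkj : k ≠ j)
    {a b : EuclideanSpace ℝ (Fin 4)} (ha : a ∈ sinF4 i) (hb : b ∈ sinF4 j) :
    a - ⟪a, b⟫ • b ∈ sinF4 k := by
  rcases inner_of_mem_sinF4 hij hki hkj ha hb with h | ⟨h, hk⟩
  · rcases inner_of_mem_sinF4 hij hki hkj ha (neg_mem_sinF4 hb) with h' | ⟨-, hk⟩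
    · rw [inner_neg_right, h] at h'; norm_num at h'
    · rwa [h, one_smul, sub_eq_add_neg]
  · rwa [h, neg_one_smul, sub_neg_eq_add]

/-- The roots among the sums `±a ± b`. -/
theorem eq_smul_of_add_mem_ΔF4 {a b : EuclideanSpace ℝ (Fin 4)} (ha : ⟪a, a⟫ = 2)
    (hb : ⟪b, b⟫ = 2) (hab : ⟪a, b⟫ = 1 ∨ ⟪a, b⟫ = -1) {c d : ℝ} (hc : c = 1 ∨ c = -1)
    (hd : d = 1 ∨ d = -1) (h : c • a + d • b ∈ ΔF4) :
    c • a + d • b = c • (a - ⟪a, b⟫ • b) := by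
  have hle := inner_self_le_of_mem_ΔF4 h
  simp only [inner_add_left, inner_add_right, real_inner_smul_left, real_inner_smul_right, ha, hb,
    real_inner_comm a b] at hle
  rcases hab with hab | hab <;> rw [hab] at hle ⊢ <;>
  rcases hc with rfl | rfl <;> rcases hd with rfl | rfl <;>
  first
  | (exfalso; norm_num at hle; done)
  | module

theorem inner_eq_of_mem_sinF4 {i j : Fin 3} (hij : i ≠ j) {a b : EuclideanSpace ℝ (Fin 4)}
    (ha : a ∈ sinF4 i) (hb : b ∈ sinF4 j) : ⟪a, b⟫ = 1 ∨ ⟪a, b⟫ = -1 := by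
  have hk : ∀ i j : Fin 3, ∃ k, k ≠ i ∧ k ≠ j := by decide
  obtain ⟨k, hki, hkj⟩ := hk i j
  exact (inner_of_mem_sinF4 hij hki hkj ha hb).imp_right And.left

theorem smul_mem_sinF4 {k : Fin 3} {v : EuclideanSpace ℝ (Fin 4)} {c : ℝ}
    (hc : c = 1 ∨ c = -1) (hv : v ∈ sinF4 k) : c • v ∈ sinF4 k := by
  rcases hc with rfl | rfl
  · rwa [one_smul]
  · rw [neg_one_smul]
    exact neg_mem_sinF4 hv

theorem mul_eq_one_or_neg_one {c d : ℝ} (hc : c = 1 ∨ c = -1) (hd : d = 1 ∨ d = -1) :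
    c * d = 1 ∨ c * d = -1 := by
  rcases hc with rfl | rfl <;> rcases hd with rfl | rfl <;> norm_num

/-- for two orthogonal pairs of long roots of `F₄` with
`R_{x,y} ⊂ Δ_sin_i`, `R_{x′,y′} ⊂ Δ_sin_j`, `i ≠ j`:
`ξ = ⟨x,x′⟩⟨y,y′⟩⟨x,y′⟩⟨y,x′⟩ ≠ 0`; every root in `Q = R_{x,y} + R_{x′,y′}` lies in
`Δ_sin_k` (`{k} = {1,2,3} ∖ {i,j}`); if `ξ > 0` then the roots in `Q` are exactly four,
forming `±{x″, y″}` with `x″ ⊥ y″`; if `ξ < 0` then `Q` contains all eight roots of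
`Δ_sin_k`. -/
theorem Q_roots_F4 (x y x' y' : EuclideanSpace ℝ (Fin 4))
    (hx : x ∈ LongF4) (hy : y ∈ LongF4) (hx' : x' ∈ LongF4) (hy' : y' ∈ LongF4)
    (hxy : ⟪x, y⟫ = 0) (hx'y' : ⟪x', y'⟫ = 0)
    (i j k : Fin 3) (hij : i ≠ j) (hki : k ≠ i) (hkj : k ≠ j)
    (hRi : Rset x y ⊆ sinF4 i) (hRj : Rset x' y' ⊆ sinF4 j) :
    (⟪x, x'⟫ * ⟪y, y'⟫ * ⟪x, y'⟫ * ⟪y, x'⟫ ≠ 0) ∧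
    (∀ z ∈ Qset x y x' y', z ∈ ΔF4 → z ∈ sinF4 k) ∧
    (0 < ⟪x, x'⟫ * ⟪y, y'⟫ * ⟪x, y'⟫ * ⟪y, x'⟫ →
      ∃ x'' y'' : EuclideanSpace ℝ (Fin 4), x'' ∈ ΔF4 ∧ y'' ∈ ΔF4 ∧
        ⟪x'', y''⟫ = 0 ∧ x'' ≠ y'' ∧ x'' ≠ -y'' ∧
        {z | z ∈ Qset x y x' y' ∧ z ∈ ΔF4} = Rset x'' y'') ∧
    (⟪x, x'⟫ * ⟪y, y'⟫ * ⟪x, y'⟫ * ⟪y, x'⟫ < 0 →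
      sinF4 k ⊆ Qset x y x' y') := by
  have hxi : x ∈ sinF4 i := hRi (by simp [Rset])
  have hyi : y ∈ sinF4 i := hRi (by simp [Rset])
  have hxj : x' ∈ sinF4 j := hRj (by simp [Rset])
  have hyj : y' ∈ sinF4 j := hRj (by simp [Rset])
  have hxx := inner_self_of_mem_LongF4 hx
  have hyy := inner_self_of_mem_LongF4 hy
  have hxx' := inner_self_of_mem_LongF4 hx'
  have hyy' := inner_self_of_mem_LongF4 hy'
  have hs := inner_eq_of_mem_sinF4 hij hxi hxj
  have hu := inner_eq_of_mem_sinF4 hij hxi hyj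
  have ht := inner_eq_of_mem_sinF4 hij hyi hxj
  have hv := inner_eq_of_mem_sinF4 hij hyi hyj
  have hsk := sub_inner_smul_mem_sinF4 hij hki hkj hxi hxj
  have huk := sub_inner_smul_mem_sinF4 hij hki hkj hxi hyj
  have htk := sub_inner_smul_mem_sinF4 hij hki hkj hyi hxj
  have hvk := sub_inner_smul_mem_sinF4 hij hki hkj hyi hyj
  have hroots : ∀ z ∈ Qset x y x' y', z ∈ ΔF4 → ∃ c : ℝ, (c = 1 ∨ c = -1) ∧
      (z = c • (x - ⟪x, x'⟫ • x') ∨ z = c • (x - ⟪x, y'⟫ • y') ∨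
        z = c • (y - ⟪y, x'⟫ • x') ∨ z = c • (y - ⟪y, y'⟫ • y')) := by
    rintro z ⟨a, ha, b, hb, rfl⟩ hz
    obtain ⟨c, hc, ha⟩ := mem_Rset_iff.1 ha
    obtain ⟨d, hd, hb⟩ := mem_Rset_iff.1 hb
    refine ⟨c, hc, ?_⟩
    rcases ha with rfl | rfl <;> rcases hb with rfl | rfl
    · exact .inl (eq_smul_of_add_mem_ΔF4 hxx hxx' hs hc hd hz)
    · exact .inr (.inl (eq_smul_of_add_mem_ΔF4 hxx hyy' hu hc hd hz))
    · exact .inr (.inr (.inl (eq_smul_of_add_mem_ΔF4 hyy hxx' ht hc hd hz)))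
    · exact .inr (.inr (.inr (eq_smul_of_add_mem_ΔF4 hyy hyy' hv hc hd hz)))
  have hQ : ∀ {c : ℝ} {a b : EuclideanSpace ℝ (Fin 4)}, (c = 1 ∨ c = -1) → (a = x ∨ a = y) →
      (b = x' ∨ b = y') → (⟪a, b⟫ = 1 ∨ ⟪a, b⟫ = -1) →
      c • (a - ⟪a, b⟫ • b) ∈ Qset x y x' y' := by
    intro c a b hc ha hb hab
    refine ⟨c • a, mem_Rset_iff.2 ⟨c, hc, ?_⟩, (-(c * ⟪a, b⟫)) • b,
      mem_Rset_iff.2 ⟨-(c * ⟪a, b⟫), ?_, ?_⟩, by module⟩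
    · exact ha.imp (congrArg _) (congrArg _)
    · rcases hc with rfl | rfl <;> rcases hab with h | h <;> rw [h] <;> norm_num
    · exact hb.imp (congrArg _) (congrArg _)
  refine ⟨?_, ?_, ?_, ?_⟩
  · rcases hs with hs | hs <;> rcases hu with hu | hu <;> rcases ht with ht | ht <;>
      rcases hv with hv | hv <;> rw [hs, hu, ht, hv] <;> norm_num
  · intro z hzQ hz
    obtain ⟨c, hc, rfl | rfl | rfl | rfl⟩ := hroots z hzQ hz
    exacts [smul_mem_sinF4 hc hsk, smul_mem_sinF4 hc huk, smul_mem_sinF4 hc htk,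
      smul_mem_sinF4 hc hvk]
  · intro hpos
    have hst : ⟪x, y'⟫ * ⟪y, y'⟫ = ⟪x, x'⟫ * ⟪y, x'⟫ := by
      rcases hs with hs | hs <;> rcases hu with hu | hu <;> rcases ht with ht | ht <;>
        rcases hv with hv | hv <;> rw [hs, hu, ht, hv] at hpos ⊢ <;> revert hpos <;> norm_num
    have hsign : -(⟪x, x'⟫ * ⟪y, x'⟫) = 1 ∨ -(⟪x, x'⟫ * ⟪y, x'⟫) = -1 := by
      rcases hs with hs | hs <;> rcases ht with ht | ht <;> rw [hs, ht] <;> norm_num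
    have hΔ : ∀ {v}, v ∈ sinF4 k → v ∈ ΔF4 := fun h => .inl (sinF4_subset_LongF4 k h)
    have hself : ∀ {v}, v ∈ sinF4 k → ⟪v, v⟫ = 2 :=
      fun h => inner_self_of_mem_LongF4 (sinF4_subset_LongF4 k h)
    have hort : ⟪x - ⟪x, x'⟫ • x', y - ⟪y, x'⟫ • x'⟫ = 0 := by
      simp only [inner_sub_left, inner_sub_right, real_inner_smul_left, real_inner_smul_right,
        hxy, hxx', real_inner_comm y x']
      ring
    have hv_eq : y - ⟪y, y'⟫ • y' = (-(⟪x, x'⟫ * ⟪y, x'⟫)) • (x - ⟪x, x'⟫ • x') := by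
      refine eq_smul_of_inner_eq hsign (hself hvk) (hself hsk) ?_
      simp only [inner_sub_left, inner_sub_right, real_inner_smul_left, real_inner_smul_right,
        hxy, hx'y', real_inner_comm x y, real_inner_comm x y', real_inner_comm x' y']
      linear_combination -hst
    have hu_eq : x - ⟪x, y'⟫ • y' = (-(⟪x, x'⟫ * ⟪y, x'⟫)) • (y - ⟪y, x'⟫ • x') := by
      refine eq_smul_of_inner_eq hsign (hself huk) (hself htk) ?_
      simp only [inner_sub_left, inner_sub_right, real_inner_smul_left, real_inner_smul_right,
        hxy, hx'y', real_inner_comm y y', real_inner_comm x' y']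
      linear_combination -hst
    refine ⟨_, _, hΔ hsk, hΔ htk, hort, ?_, ?_, ?_⟩
    · intro h
      have := hself htk
      rw [h] at hort
      linarith
    · intro h
      have := hself htk
      rw [h, inner_neg_left] at hort
      linarith
    · ext z
      rw [mem_Rset_iff]
      constructor
      · rintro ⟨hzQ, hz⟩
        obtain ⟨c, hc, h | h | h | h⟩ := hroots z hzQ hz
        · exact ⟨c, hc, .inl h⟩
        · exact ⟨_, mul_eq_one_or_neg_one hc hsign, .inr (by rw [h, hu_eq, smul_smul])⟩
        · exact ⟨c, hc, .inr h⟩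
        · exact ⟨_, mul_eq_one_or_neg_one hc hsign, .inl (by rw [h, hv_eq, smul_smul])⟩
      · rintro ⟨c, hc, rfl | rfl⟩
        · exact ⟨hQ hc (.inl rfl) (.inl rfl) hs, hΔ (smul_mem_sinF4 hc hsk)⟩
        · exact ⟨hQ hc (.inr rfl) (.inl rfl) ht, hΔ (smul_mem_sinF4 hc htk)⟩
  · intro hneg z hz
    have hself := inner_self_of_mem_LongF4 (sinF4_subset_LongF4 k hz)
    have hzx := inner_eq_of_mem_sinF4 hki hz hxi
    have hzy := inner_eq_of_mem_sinF4 hki hz hyi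
    have hzx' := inner_eq_of_mem_sinF4 hkj hz hxj
    have hzy' := inner_eq_of_mem_sinF4 hkj hz hyj
    have hmem : ∀ {a b}, (a = x ∨ a = y) → (b = x' ∨ b = y') → a - ⟪a, b⟫ • b ∈ sinF4 k →
        (⟪z, a⟫ = 1 ∨ ⟪z, a⟫ = -1) → (⟪a, b⟫ = 1 ∨ ⟪a, b⟫ = -1) →
        ⟪a, b⟫ * ⟪z, b⟫ = -⟪z, a⟫ → z ∈ Qset x y x' y' := by
      intro a b ha hb hk hza hab h
      have hz_eq : z = ⟪z, a⟫ • (a - ⟪a, b⟫ • b) := by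
        refine eq_smul_of_inner_eq hza hself
          (inner_self_of_mem_LongF4 (sinF4_subset_LongF4 k hk)) ?_
        rw [inner_sub_right, real_inner_smul_right]
        linear_combination -h
      rw [hz_eq]
      exact hQ hza ha hb hab
    have hcases : ⟪x, x'⟫ * ⟪z, x'⟫ = -⟪z, x⟫ ∨ ⟪x, y'⟫ * ⟪z, y'⟫ = -⟪z, x⟫ ∨
        ⟪y, x'⟫ * ⟪z, x'⟫ = -⟪z, y⟫ ∨ ⟪y, y'⟫ * ⟪z, y'⟫ = -⟪z, y⟫ := by
      have hdich : ∀ {p q r : ℝ}, (p = 1 ∨ p = -1) → (q = 1 ∨ q = -1) → (r = 1 ∨ r = -1) →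
          p * q ≠ -r → p = r * q := by
        rintro p q r (rfl | rfl) (rfl | rfl) (rfl | rfl) <;> norm_num
      by_contra! h
      rw [hdich hs hzx' hzx h.1, hdich hu hzy' hzx h.2.1, hdich ht hzx' hzy h.2.2.1,
        hdich hv hzy' hzy h.2.2.2] at hneg
      nlinarith [sq_nonneg (⟪z, x⟫ * ⟪z, y⟫ * ⟪z, x'⟫ * ⟪z, y'⟫)]
    rcases hcases with h | h | h | h
    · exact hmem (.inl rfl) (.inl rfl) hsk hzx hs h
    · exact hmem (.inl rfl) (.inr rfl) huk hzx hu h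
    · exact hmem (.inr rfl) (.inl rfl) htk hzy ht h
    · exact hmem (.inr rfl) (.inr rfl) hvk hzy hv h
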